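/- Let γ ∈ ℝ, let q ≥ 1 and let ℓ, m be integers with ℓ ≥ 2 and m ≥ ℓ + q. Let Z_1,…,Z_{2m−ℓ} be iid standard GP(γ) (or more generally iid with a continuous distribution), and for i ∈ {m−ℓ+1,…,m} let 1_{i,ℓ,m} be the indicator of the event that Z_i is in the top-q of Z_{[1:m]} or in the top-q of Z_{[(m−ℓ+1):(2m−ℓ)]}. Then E[1_{m−1,ℓ,m} · 1_{m,ℓ,m}] ≤ 2(2q² − q)/((m−1)(m−ℓ+1)). -/

import Mathlib

open MeasureTheory ProbabilityTheory Filter Real Set Topology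
open scoped ENNReal NNReal Classical

noncomputable section

/-- The `j`-th largest entry of the tuple `x` (`j = 0` gives the maximum, `j = 1` the
second largest, ...); `0` when `j` is out of range. -/
def descStat {m : ℕ} (x : Fin m → ℝ) (j : ℕ) : ℝ :=
  if h : j < m then (x ∘ Tuple.sort x) ⟨m - 1 - j, by omega⟩ else 0

/-- The kernel of degree `m` obtained from `K` by applying it to the top-`q`
(descending) order statistics: `K_m(x_1,…,x_m) = K(x_{m:m},…,x_{m−q+1:m})`. -/
def Km {q : ℕ} (K : (Fin q → ℝ) → ℝ) (m : ℕ) (x : Fin m → ℝ) : ℝ :=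
  K fun j => descStat x (j : ℕ)

/-- `K(a x_1 + b, …, a x_q + b) = K(x_1, …, x_q)` for all `a > 0`, `b ∈ ℝ`. -/
def LocScaleInvariant {q : ℕ} (K : (Fin q → ℝ) → ℝ) : Prop :=
  ∀ a b : ℝ, 0 < a → ∀ x : Fin q → ℝ, K (fun j => a * x j + b) = K x

/-- `h_γ(y) = (y^γ - 1)/γ`, interpreted as `log y` when `γ = 0`. -/
def hGamma (γ : ℝ) (y : ℝ) : ℝ := if γ = 0 then Real.log y else (y ^ γ - 1) / γ

lemma measurable_hGamma (γ : ℝ) : Measurable (hGamma γ) := by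
  unfold hGamma
  split_ifs
  · exact Real.measurable_log
  · fun_prop

/-- The uniform distribution on `(0,1)`. -/
def unif01 : Measure ℝ := volume.restrict (Set.Ioo (0:ℝ) 1)

instance : IsProbabilityMeasure unif01 := ⟨by simp [unif01]⟩

/-- The standard Pareto(1) distribution, with cdf `1 - 1/y` for `y ≥ 1`. -/
def pareto1 : Measure ℝ := ProbabilityTheory.paretoMeasure 1 1

instance : IsProbabilityMeasure pareto1 :=
  ProbabilityTheory.isProbabilityMeasure_paretoMeasure one_pos one_pos

/-- The standard generalized Pareto distribution `GP(γ)`: the law of `h_γ(Y)` for `Y`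
standard Pareto(1). -/
def gpMeasure (γ : ℝ) : Measure ℝ := pareto1.map (hGamma γ)

instance (γ : ℝ) : IsProbabilityMeasure (gpMeasure γ) :=
  Measure.isProbabilityMeasure_map (measurable_hGamma γ).aemeasurable

/-- The unit exponential distribution: the law of `-log U` for `U` uniform on `(0,1)`. -/
def expMeasure1 : Measure ℝ := unif01.map fun u => -Real.log u

instance : IsProbabilityMeasure expMeasure1 :=
  Measure.isProbabilityMeasure_map Real.measurable_log.neg.aemeasurable

/-- The Erlang(q) distribution: the law of the sum of `q` independent unit exponentials. -/
def erlangMeasure (q : ℕ) : Measure ℝ :=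
  (Measure.pi fun _ : Fin q => expMeasure1).map fun e => ∑ i, e i

instance (q : ℕ) : IsProbabilityMeasure (erlangMeasure q) :=
  Measure.isProbabilityMeasure_map
    (Finset.measurable_sum _ fun i _ => measurable_pi_apply i).aemeasurable

/-- The joint law of `r` iid `GP(γ)` random variables. -/
def gpPi (γ : ℝ) (r : ℕ) : Measure (Fin r → ℝ) := Measure.pi fun _ => gpMeasure γ

instance (γ : ℝ) (r : ℕ) : IsProbabilityMeasure (gpPi γ r) := by
  unfold gpPi; infer_instance

/-- The vector `(Z_{q-j:q-1})_{j=1}^{q}`: the descending order statistics of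
`z_1,…,z_{q-1}` with an extra last entry `Z_{0:q-1} := 0`. -/
def refVec {q : ℕ} (z : Fin (q-1) → ℝ) : Fin q → ℝ := fun j => descStat z (j : ℕ)

/-- `θ = E[K((Z_{q-j:q-1})_{j=1}^{q})]` for iid `GP(γ)` variables `Z_1,…,Z_{q-1}`. -/
def thetaK (γ : ℝ) {q : ℕ} (K : (Fin q → ℝ) → ℝ) : ℝ :=
  ∫ z, K (refVec z) ∂(gpPi γ (q-1))

/-- all moments of `K((Z_{q-j:q-1})_{j=1}^{q})` are finite. -/
def MomentCond (γ : ℝ) {q : ℕ} (K : (Fin q → ℝ) → ℝ) : Prop :=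
  ∀ p : ℝ, 0 < p →
    ∫⁻ z, ENNReal.ofReal (|K (refVec z)| ^ p) ∂(gpPi γ (q-1)) < ⊤

/-- The asymptotic variance
`σ²_K(γ) = ∫_0^∞ (E[K̄_{q+1}((Z_{q-j:q-1})_{j=1}^q, h_γ(S_q/x))])² dx`. -/
def sigmaSqK (γ : ℝ) {q : ℕ} (K : (Fin q → ℝ) → ℝ) : ℝ :=
  ∫ x in Set.Ioi (0:ℝ),
    (∫ zs : (Fin (q-1) → ℝ) × ℝ,
        (Km K (q+1) (Fin.snoc (refVec zs.1) (hGamma γ (zs.2 / x))) - thetaK γ K)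
      ∂((gpPi γ (q-1)).prod (erlangMeasure q))) ^ 2

/-- The U-statistic with kernel `K_m` evaluated on the sample `z`. -/
def UStat {q : ℕ} (K : (Fin q → ℝ) → ℝ) (m n : ℕ) (z : Fin n → ℝ) : ℝ :=
  ((n.choose m : ℝ))⁻¹ *
    ∑ I ∈ Finset.powersetCard m (Finset.univ : Finset (Fin n)),
      Km K I.card fun j => z (I.orderIsoOfFin rfl j).1

/-- Condition on the degree sequence: `m = o(n^{1-ε})` and `log n = o(m^{1-δ})`. -/
def DegreeCond (m : ℕ → ℕ) : Prop :=
  ∃ ε > (0:ℝ), ∃ δ > (0:ℝ),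
    Tendsto (fun n => (m n : ℝ) / (n : ℝ) ^ (1 - ε)) atTop (𝓝 0) ∧
    Tendsto (fun n : ℕ => Real.log n / (m n : ℝ) ^ (1 - δ)) atTop (𝓝 0)

/-- `ζ_{m,ℓ} = cov(K_m(Z_S), K_m(Z_{S'}))` for the blocks `S = [1:m]`,
`S' = [(m-ℓ+1):(2m-ℓ)]` (zero-indexed here), which overlap in `ℓ` indices. -/
def zetaCov {Ω : Type*} [MeasurableSpace Ω] (P : Measure Ω) {q : ℕ}
    (K : (Fin q → ℝ) → ℝ) (Z : ℕ → Ω → ℝ) (m ℓ : ℕ) : ℝ :=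
  (∫ ω, Km K m (fun i : Fin m => Z i ω) * Km K m (fun i : Fin m => Z (m - ℓ + i) ω) ∂P)
    - (∫ ω, Km K m (fun i : Fin m => Z i ω) ∂P)
      * (∫ ω, Km K m (fun i : Fin m => Z (m - ℓ + i) ω) ∂P)

/-- Convergence in distribution to a Gaussian, expressed via pointwise convergence of
the cumulative distribution functions (the Gaussian cdf being continuous). -/
def TendstoGaussian {Ω : Type*} [MeasurableSpace Ω] (P : Measure Ω)
    (T : ℕ → Ω → ℝ) (μ : ℝ) (v : ℝ≥0) : Prop :=
  ∀ x : ℝ, Tendsto (fun n => (P {ω | T n ω ≤ x}).toReal) atTop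
    (𝓝 ((gaussianReal μ v (Set.Iic x)).toReal))

/-- Convergence in probability to the constant `c`. -/
def TendstoInProb {Ω : Type*} [MeasurableSpace Ω] (P : Measure Ω)
    (T : ℕ → Ω → ℝ) (c : ℝ) : Prop :=
  ∀ ε : ℝ, 0 < ε → Tendsto (fun n => (P {ω | ε ≤ |T n ω - c|}).toReal) atTop (𝓝 0)


/-- `Z_i` is among the `q` largest of the values `(Z_a)_{a ∈ S}` (for `i ∈ S`):
fewer than `q` members of `S` are strictly larger. -/
def inTopQ (q : ℕ) {Ω : Type*} (Z : ℕ → Ω → ℝ) (S : Finset ℕ) (i : ℕ) (ω : Ω) : Prop :=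
  (S.filter fun a => Z i ω < Z a ω).card < q

/-- The counting variable `N_{ℓ,m}`: the number of `i ∈ [(m-ℓ+1):m]` such that `Z_i` is
in the top-`q` of `Z_{[1:m]}` or of `Z_{[(m-ℓ+1):(2m-ℓ)]}`. -/
def Ncount (q : ℕ) {Ω : Type*} (Z : ℕ → Ω → ℝ) (ℓ m : ℕ) (ω : Ω) : ℕ :=
  ((Finset.Icc (m - ℓ + 1) m).filter fun i =>
    inTopQ q Z (Finset.Icc 1 m) i ω ∨
      inTopQ q Z (Finset.Icc (m - ℓ + 1) (2 * m - ℓ)) i ω).card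

/-- The kernel `K_{|S|}` applied to the subsample `(Z_a)_{a ∈ S}`. -/
def KmOn {q : ℕ} (K : (Fin q → ℝ) → ℝ) {Ω : Type*} (Z : ℕ → Ω → ℝ)
    (S : Finset ℕ) (ω : Ω) : ℝ :=
  Km K S.card fun j => Z (S.orderIsoOfFin rfl j).1 ω

/-- `Ξ_{ℓ,m} = K_m(Z_{[1:m]}) K_m(Z_{[(m-ℓ+1):(2m-ℓ)]})`. -/
def XiRV {q : ℕ} (K : (Fin q → ℝ) → ℝ) {Ω : Type*} (Z : ℕ → Ω → ℝ)
    (ℓ m : ℕ) (ω : Ω) : ℝ :=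
  KmOn K Z (Finset.Icc 1 m) ω * KmOn K Z (Finset.Icc (m - ℓ + 1) (2 * m - ℓ)) ω

lemma inTopQ_measurableSet (q : ℕ) {Ω : Type*} [MeasurableSpace Ω] (Z : ℕ → Ω → ℝ)
    (hZ : ∀ i, Measurable (Z i)) (S : Finset ℕ) (i : ℕ) :
    MeasurableSet {ω | inTopQ q Z S i ω} := by
  have h : Measurable fun ω => ∑ a ∈ S, (if Z i ω < Z a ω then 1 else 0 : ℕ) := by
    refine Finset.measurable_sum _ fun a _ => ?_
    exact Measurable.ite (measurableSet_lt (hZ i) (hZ a)) measurable_const measurable_const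
  have h2 : {ω | inTopQ q Z S i ω}
      = (fun ω => ∑ a ∈ S, (if Z i ω < Z a ω then 1 else 0 : ℕ)) ⁻¹' (Set.Iio q) := by
    ext ω
    simp only [inTopQ, Set.mem_setOf_eq, Set.mem_preimage, Set.mem_Iio, Finset.card_filter]
  rw [h2]
  exact h measurableSet_Iio

lemma inTopQ_perm (q : ℕ) {Ω : Type*} (Z : ℕ → Ω → ℝ) (S : Finset ℕ) (σ : Equiv.Perm ℕ)
    (hσ : ∀ a, σ a ∈ S ↔ a ∈ S) (i : ℕ) (ω : Ω) :
    inTopQ q (fun a => Z (σ a)) S i ω ↔ inTopQ q Z S (σ i) ω := by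
  unfold inTopQ
  have : (S.filter fun a => Z (σ i) ω < Z (σ a) ω).card
      = (S.filter fun a => Z (σ i) ω < Z a ω).card := by
    refine Finset.card_bij (fun a _ => σ a) ?_ ?_ ?_
    · intro a ha
      simp only [Finset.mem_filter] at ha ⊢
      exact ⟨(hσ a).2 ha.1, ha.2⟩
    · intro a _ b _ h
      exact σ.injective h
    · intro b hb
      simp only [Finset.mem_filter] at hb
      refine ⟨σ.symm b, ?_, by simp⟩
      simp only [Finset.mem_filter]
      refine ⟨(hσ _).1 (by simpa using hb.1), by simpa using hb.2⟩
  rw [this]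

lemma inTopQ_card (q : ℕ) {Ω : Type*} (Z : ℕ → Ω → ℝ) (S : Finset ℕ) (ω : Ω)
    (hinj : ∀ a b, a ≠ b → Z a ω ≠ Z b ω) :
    (S.filter fun i => inTopQ q Z S i ω).card ≤ q := by
  by_contra hcon
  push Not at hcon
  have hne : (S.filter fun i => inTopQ q Z S i ω).Nonempty :=
    Finset.card_pos.1 (by omega)
  obtain ⟨i0, hi0, hmin⟩ := Finset.exists_min_image _ (fun i => Z i ω) hne
  have h1 : (S.filter fun a => Z i0 ω < Z a ω).card < q := (Finset.mem_filter.1 hi0).2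
  have h2 : (S.filter fun i => inTopQ q Z S i ω).erase i0
      ⊆ S.filter fun a => Z i0 ω < Z a ω := by
    intro a ha
    rw [Finset.mem_erase] at ha
    rw [Finset.mem_filter]
    exact ⟨(Finset.mem_filter.1 ha.2).1,
      lt_of_le_of_ne (hmin a ha.2) (hinj _ _ (Ne.symm ha.1))⟩
  have h3 := Finset.card_le_card h2
  rw [Finset.card_erase_of_mem hi0] at h3
  omega

lemma no_ties {Ω : Type*} [MeasurableSpace Ω] (P : Measure Ω) [IsProbabilityMeasure P]
    (Z : ℕ → Ω → ℝ) (hZmeas : ∀ i, Measurable (Z i))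
    (hIndep : iIndepFun Z P)
    (μ : Measure ℝ) (hDist : ∀ i, Measure.map (Z i) P = μ)
    (hCont : ∀ x : ℝ, μ {x} = 0) :
    ∀ᵐ ω ∂P, ∀ a b, a ≠ b → Z a ω ≠ Z b ω := by
  rw [ae_all_iff]; intro a
  rw [ae_all_iff]; intro b
  by_cases hab : a = b
  · simp [hab]
  have hμ : IsProbabilityMeasure μ := by
    rw [← hDist 0]; exact Measure.isProbabilityMeasure_map (hZmeas 0).aemeasurable
  have h := hIndep.indepFun hab
  rw [indepFun_iff_map_prod_eq_prod_map_map (hZmeas a).aemeasurable (hZmeas b).aemeasurable,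
    hDist, hDist] at h
  have hd : (μ.prod μ) (Set.diagonal ℝ) = 0 := by
    rw [Measure.measure_prod_null measurableSet_diagonal]
    refine Filter.Eventually.of_forall fun x => ?_
    have : Prod.mk x ⁻¹' Set.diagonal ℝ = {x} := by
      ext y; simp [eq_comm]
    simp only [this, hCont, Pi.zero_apply]
  rw [← h, Measure.map_apply ((hZmeas a).prodMk (hZmeas b)) measurableSet_diagonal] at hd
  have : ∀ᵐ ω ∂P, Z a ω ≠ Z b ω := by
    rw [ae_iff]
    convert hd using 2
    ext ω; simp
  filter_upwards [this] with ω hω _ using hω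

lemma exch {Ω : Type*} [MeasurableSpace Ω] (P : Measure Ω) [IsProbabilityMeasure P]
    (Z : ℕ → Ω → ℝ) (hZmeas : ∀ i, Measurable (Z i))
    (hIndep : iIndepFun Z P)
    (μ : Measure ℝ) (hDist : ∀ i, Measure.map (Z i) P = μ) (q : ℕ)
    (S T : Finset ℕ) (σ : Equiv.Perm ℕ)
    (hS : ∀ a, σ a ∈ S ↔ a ∈ S) (hT : ∀ a, σ a ∈ T ↔ a ∈ T) (i j : ℕ) :
    P {ω | inTopQ q Z S (σ i) ω ∧ inTopQ q Z T (σ j) ω}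
      = P {ω | inTopQ q Z S i ω ∧ inTopQ q Z T j ω} := by
  have h1 := hIndep.map_fun_eq_infinitePi_map hZmeas
  have h2 := (hIndep.precomp σ.injective).map_fun_eq_infinitePi_map (fun i => hZmeas (σ i))
  simp only [Function.comp_apply, Function.comp_def, hDist] at h1 h2
  have h3 := h2.trans h1.symm
  set D : Set (ℕ → ℝ) := {x | inTopQ q (fun i (x : ℕ → ℝ) => x i) S i x ∧
    inTopQ q (fun i (x : ℕ → ℝ) => x i) T j x} with hD
  have hDm : MeasurableSet D :=
    (inTopQ_measurableSet q _ (fun i => measurable_pi_apply i) S i).inter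
      (inTopQ_measurableSet q _ (fun i => measurable_pi_apply i) T j)
  have h4 : Measure.map (fun ω i => Z (σ i) ω) P D = Measure.map (fun ω i => Z i ω) P D :=
    congrArg (fun ν => ν D) h3
  rw [Measure.map_apply (measurable_pi_iff.2 fun i => hZmeas (σ i)) hDm,
    Measure.map_apply (measurable_pi_iff.2 hZmeas) hDm] at h4
  have h5 : {ω | inTopQ q Z S (σ i) ω ∧ inTopQ q Z T (σ j) ω}
      = (fun ω i => Z (σ i) ω) ⁻¹' D := by
    ext ω
    rw [Set.mem_setOf_eq, ← inTopQ_perm q Z S σ hS, ← inTopQ_perm q Z T σ hT]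
    rfl
  rw [h5, h4]
  rfl

lemma pair_bound {Ω : Type*} [MeasurableSpace Ω] (P : Measure Ω) [IsProbabilityMeasure P]
    (Z : ℕ → Ω → ℝ) (hZmeas : ∀ i, Measurable (Z i))
    (hIndep : iIndepFun Z P)
    (μ : Measure ℝ) (hDist : ∀ i, Measure.map (Z i) P = μ)
    (hCont : ∀ x : ℝ, μ {x} = 0) (q : ℕ)
    (S T : Finset ℕ) (W : Finset (ℕ × ℕ)) (N : ℕ) (i j : ℕ)
    (hsym : ∀ w ∈ W, ∃ σ : Equiv.Perm ℕ, (∀ a, σ a ∈ S ↔ a ∈ S) ∧ (∀ a, σ a ∈ T ↔ a ∈ T) ∧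
      σ i = w.1 ∧ σ j = w.2)
    (hcount : ∀ ω, (∀ a b, a ≠ b → Z a ω ≠ Z b ω) →
      (W.filter fun w => inTopQ q Z S w.1 ω ∧ inTopQ q Z T w.2 ω).card ≤ N) :
    (W.card : ℝ) * P.real {ω | inTopQ q Z S i ω ∧ inTopQ q Z T j ω} ≤ N := by
  have hmeas : ∀ w : ℕ × ℕ, MeasurableSet {ω | inTopQ q Z S w.1 ω ∧ inTopQ q Z T w.2 ω} :=
    fun w => (inTopQ_measurableSet q Z hZmeas S w.1).inter
      (inTopQ_measurableSet q Z hZmeas T w.2)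
  have h1 : ∀ w ∈ W, P.real {ω | inTopQ q Z S w.1 ω ∧ inTopQ q Z T w.2 ω}
      = P.real {ω | inTopQ q Z S i ω ∧ inTopQ q Z T j ω} := by
    intro w hw
    obtain ⟨σ, hS, hT, e1, e2⟩ := hsym w hw
    rw [← e1, ← e2]
    simp only [Measure.real]
    rw [exch P Z hZmeas hIndep μ hDist q S T σ hS hT]
  have h2 : (W.card : ℝ) * P.real {ω | inTopQ q Z S i ω ∧ inTopQ q Z T j ω}
      = ∑ w ∈ W, ∫ ω, ({ω | inTopQ q Z S w.1 ω ∧ inTopQ q Z T w.2 ω}).indicator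
          (fun _ => (1:ℝ)) ω ∂P := by
    rw [← nsmul_eq_mul, ← Finset.sum_const]
    refine Finset.sum_congr rfl fun w hw => ?_
    rw [← h1 w hw]
    exact (integral_indicator_one (hmeas w)).symm
  have hint : ∀ w ∈ W, Integrable (({ω | inTopQ q Z S w.1 ω ∧ inTopQ q Z T w.2 ω}).indicator
          (fun _ => (1:ℝ))) P := fun w _ => (integrable_const _).indicator (hmeas w)
  rw [h2, ← integral_finsetSum _ hint]
  calc _ ≤ ∫ _, (N : ℝ) ∂P := by
        refine integral_mono_ae (integrable_finsetSum _ hint) (integrable_const _) ?_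
        filter_upwards [no_ties P Z hZmeas hIndep μ hDist hCont] with ω hω
        have := hcount ω hω
        have h3 : ((W.filter fun w => inTopQ q Z S w.1 ω ∧ inTopQ q Z T w.2 ω).card : ℝ)
          ≤ N := by exact_mod_cast this
        refine le_trans (le_of_eq ?_) h3
        rw [Finset.card_filter]
        push_cast
        refine Finset.sum_congr rfl fun w _ => ?_
        simp [Set.indicator_apply]
    _ = N := by simp

lemma swap_mem (S : Finset ℕ) (i j : ℕ) (h : i ∈ S ↔ j ∈ S) (a : ℕ) :
    Equiv.swap i j a ∈ S ↔ a ∈ S := by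
  rw [Equiv.swap_apply_def]
  split_ifs with h1 h2
  · subst h1; exact h.symm
  · subst h2; exact h
  · rfl

lemma same_bound {Ω : Type*} [MeasurableSpace Ω] (P : Measure Ω) [IsProbabilityMeasure P]
    (Z : ℕ → Ω → ℝ) (hZmeas : ∀ i, Measurable (Z i))
    (hIndep : iIndepFun Z P)
    (μ : Measure ℝ) (hDist : ∀ i, Measure.map (Z i) P = μ)
    (hCont : ∀ x : ℝ, μ {x} = 0) (q : ℕ)
    (S : Finset ℕ) (i j : ℕ) (hi : i ∈ S) (hj : j ∈ S) (hij : i ≠ j) :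
    ((S.card * S.card - S.card : ℕ) : ℝ) *
      P.real {ω | inTopQ q Z S i ω ∧ inTopQ q Z S j ω} ≤ ((q * q - q : ℕ) : ℝ) := by
  rw [← Finset.offDiag_card]
  refine pair_bound P Z hZmeas hIndep μ hDist hCont q S S S.offDiag _ i j ?_ ?_
  · rintro ⟨i', j'⟩ hw
    rw [Finset.mem_offDiag] at hw
    obtain ⟨hi', hj', hne⟩ := hw
    simp only at hi' hj' hne
    have hj1 : Equiv.swap i i' j ∈ S := (swap_mem S i i' (by simp [hi, hi']) j).2 hj
    have hp : ∀ a, (Equiv.swap (Equiv.swap i i' j) j' * Equiv.swap i i') a ∈ S ↔ a ∈ S := by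
      intro a
      rw [Equiv.Perm.mul_apply, swap_mem S _ _ (by simp [hj1, hj']),
        swap_mem S _ _ (by simp [hi, hi'])]
    refine ⟨Equiv.swap (Equiv.swap i i' j) j' * Equiv.swap i i', hp, hp, ?_, ?_⟩
    · rw [Equiv.Perm.mul_apply, Equiv.swap_apply_left]
      refine Equiv.swap_apply_of_ne_of_ne ?_ hne
      intro h
      have : Equiv.swap i i' i = Equiv.swap i i' j := by rw [Equiv.swap_apply_left]; exact h
      exact hij ((Equiv.swap i i').injective this)
    · simp
  · intro ω hω
    have h1 := inTopQ_card q Z S ω hω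
    have h2 : (S.offDiag.filter fun w => inTopQ q Z S w.1 ω ∧ inTopQ q Z S w.2 ω)
        ⊆ (S.filter fun i => inTopQ q Z S i ω).offDiag := by
      intro w hw
      simp only [Finset.mem_filter, Finset.mem_offDiag] at hw ⊢
      tauto
    refine (Finset.card_le_card h2).trans ?_
    rw [Finset.offDiag_card]
    generalize (S.filter fun i => inTopQ q Z S i ω).card = t at h1
    rw [← Nat.mul_sub_one, ← Nat.mul_sub_one]
    exact Nat.mul_le_mul h1 (by omega)

lemma disj_bound {Ω : Type*} [MeasurableSpace Ω] (P : Measure Ω) [IsProbabilityMeasure P]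
    (Z : ℕ → Ω → ℝ) (hZmeas : ∀ i, Measurable (Z i))
    (hIndep : iIndepFun Z P)
    (μ : Measure ℝ) (hDist : ∀ i, Measure.map (Z i) P = μ)
    (hCont : ∀ x : ℝ, μ {x} = 0) (q : ℕ)
    (S T : Finset ℕ) (hST : Disjoint S T) (i j : ℕ) (hi : i ∈ S) (hj : j ∈ T) :
    ((S.card * T.card : ℕ) : ℝ) *
      P.real {ω | inTopQ q Z S i ω ∧ inTopQ q Z T j ω} ≤ ((q * q : ℕ) : ℝ) := by
  rw [← Finset.card_product]
  rw [Finset.disjoint_left] at hST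
  refine pair_bound P Z hZmeas hIndep μ hDist hCont q S T (S ×ˢ T) _ i j ?_ ?_
  · rintro ⟨i', j'⟩ hw
    rw [Finset.mem_product] at hw
    obtain ⟨hi', hj'⟩ := hw
    simp only at hi' hj'
    have a1 := hST hi
    have a2 := hST hi'
    have a3 : j ∉ S := fun h => hST h hj
    have a4 : j' ∉ S := fun h => hST h hj'
    refine ⟨Equiv.swap j j' * Equiv.swap i i', ?_, ?_, ?_, ?_⟩
    · intro a
      rw [Equiv.Perm.mul_apply, swap_mem S _ _ (by tauto), swap_mem S _ _ (by tauto)]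
    · intro a
      rw [Equiv.Perm.mul_apply, swap_mem T _ _ (by tauto), swap_mem T _ _ (by tauto)]
    · rw [Equiv.Perm.mul_apply, Equiv.swap_apply_left]
      exact Equiv.swap_apply_of_ne_of_ne (fun h => a3 (h ▸ hi')) (fun h => a4 (h ▸ hi'))
    · have n1 : j ≠ i := fun h => a3 (h ▸ hi)
      have n2 : j ≠ i' := fun h => a3 (h ▸ hi')
      rw [Equiv.Perm.mul_apply, Equiv.swap_apply_of_ne_of_ne n1 n2, Equiv.swap_apply_left]
  · intro ω hω
    have h2 : ((S ×ˢ T).filter fun w => inTopQ q Z S w.1 ω ∧ inTopQ q Z T w.2 ω)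
        ⊆ (S.filter fun i => inTopQ q Z S i ω) ×ˢ (T.filter fun i => inTopQ q Z T i ω) := by
      intro w hw
      simp only [Finset.mem_filter, Finset.mem_product] at hw ⊢
      tauto
    refine (Finset.card_le_card h2).trans ?_
    rw [Finset.card_product]
    exact Nat.mul_le_mul (inTopQ_card q Z S ω hω) (inTopQ_card q Z T ω hω)

lemma inTopQ_mono (q : ℕ) {Ω : Type*} (Z : ℕ → Ω → ℝ) (S T : Finset ℕ) (h : T ⊆ S)
    (i : ℕ) (ω : Ω) (hi : inTopQ q Z S i ω) : inTopQ q Z T i ω :=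
  lt_of_le_of_lt (Finset.card_le_card (Finset.filter_subset_filter _ h)) hi

/-- Lemma: second moment of the indicators.
For iid random variables with a continuous (atomless) common distribution,
`E[1_{m-1,ℓ,m} 1_{m,ℓ,m}] ≤ 2(2q² - q)/((m-1)(m-ℓ+1))`. -/
theorem indicator_product_bound
    {Ω : Type*} [MeasurableSpace Ω] (P : Measure Ω) [IsProbabilityMeasure P]
    (q ℓ m : ℕ) (hq : 1 ≤ q) (hℓ : 2 ≤ ℓ) (hm : ℓ + q ≤ m)
    (Z : ℕ → Ω → ℝ) (hZmeas : ∀ i, Measurable (Z i))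
    (hIndep : iIndepFun Z P)
    (μ : Measure ℝ) (hDist : ∀ i, Measure.map (Z i) P = μ)
    (hCont : ∀ x : ℝ, μ {x} = 0) :
    (P ({ω | inTopQ q Z (Finset.Icc 1 m) (m - 1) ω ∨
            inTopQ q Z (Finset.Icc (m - ℓ + 1) (2 * m - ℓ)) (m - 1) ω} ∩
        {ω | inTopQ q Z (Finset.Icc 1 m) m ω ∨
            inTopQ q Z (Finset.Icc (m - ℓ + 1) (2 * m - ℓ)) m ω})).toReal
      ≤ 2 * (2 * (q : ℝ) ^ 2 - (q : ℝ)) /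
          (((m : ℝ) - 1) * ((m : ℝ) - (ℓ : ℝ) + 1)) := by
  have hmq : (2:ℝ) + 1 ≤ m := by exact_mod_cast (by omega : 2 + 1 ≤ m)
  have hmℓ : (ℓ:ℝ) + q ≤ m := by exact_mod_cast hm
  have hqR : (1:ℝ) ≤ q := by exact_mod_cast hq
  have hℓR : (2:ℝ) ≤ ℓ := by exact_mod_cast hℓ
  set A := Finset.Icc 1 m with hA
  set B := Finset.Icc (m - ℓ + 1) (2 * m - ℓ) with hB
  have hAc : A.card = m := by simp [hA]
  have hBc : B.card = m := by simp [hB]; omega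
  have hBA : (B \ A).card = m - ℓ := by
    have : B \ A = Finset.Icc (m + 1) (2 * m - ℓ) := by
      ext a; simp only [hA, hB, Finset.mem_sdiff, Finset.mem_Icc]; omega
    rw [this, Nat.card_Icc]; omega
  -- same-block terms
  have same : ∀ S : Finset ℕ, S.card = m → m - 1 ∈ S → m ∈ S →
      P.real {ω | inTopQ q Z S (m-1) ω ∧ inTopQ q Z S m ω}
        ≤ (q * (q - 1) : ℝ) / (((m : ℝ) - 1) * ((m : ℝ) - (ℓ : ℝ) + 1)) := by
    intro S hS h1 h2
    have := same_bound P Z hZmeas hIndep μ hDist hCont q S (m-1) m h1 h2 (by omega)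
    rw [hS, Nat.cast_sub (Nat.le_mul_self m), Nat.cast_sub (Nat.le_mul_self q)] at this
    push_cast at this
    rw [le_div_iff₀ (by apply mul_pos <;> linarith)]
    have hp : 0 ≤ P.real {ω | inTopQ q Z S (m-1) ω ∧ inTopQ q Z S m ω} := measureReal_nonneg
    have : P.real {ω | inTopQ q Z S (m-1) ω ∧ inTopQ q Z S m ω} *
        (((m : ℝ) - 1) * ((m : ℝ) - (ℓ : ℝ) + 1)) ≤
        P.real {ω | inTopQ q Z S (m-1) ω ∧ inTopQ q Z S m ω} * (((m : ℝ) - 1) * m) := by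
      apply mul_le_mul_of_nonneg_left _ hp
      apply mul_le_mul_of_nonneg_left _ (by linarith)
      linarith
    nlinarith
  have cross : ∀ i j : ℕ, i ∈ A → j ∈ A → j ∈ B → i ≠ j →
      P.real {ω | inTopQ q Z A i ω ∧ inTopQ q Z B j ω}
        ≤ (q * q : ℝ) / (((m : ℝ) - 1) * ((m : ℝ) - (ℓ : ℝ) + 1)) := by
    intro i j hi hj hj' hij
    have hd : Disjoint (A.erase j) (insert j (B \ A)) := by
      rw [Finset.disjoint_left]
      intro a ha
      simp only [Finset.mem_erase, Finset.mem_insert, Finset.mem_sdiff] at ha ⊢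
      tauto
    have := disj_bound P Z hZmeas hIndep μ hDist hCont q (A.erase j) (insert j (B \ A)) hd i j
      (Finset.mem_erase.2 ⟨hij, hi⟩) (Finset.mem_insert_self _ _)
    rw [Finset.card_erase_of_mem hj, Finset.card_insert_of_notMem (by simp [hj]), hAc, hBA]
      at this
    push_cast [Nat.cast_sub (by omega : 1 ≤ m), Nat.cast_sub (by omega : ℓ ≤ m)] at this
    rw [le_div_iff₀ (by apply mul_pos <;> linarith), mul_comm]
    refine le_trans (mul_le_mul_of_nonneg_left ?_ (by apply mul_nonneg <;> linarith)) this
    apply measureReal_mono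
    · rintro ω ⟨h1, h2⟩
      refine ⟨inTopQ_mono q Z A _ (Finset.erase_subset _ _) i ω h1,
        inTopQ_mono q Z B _ ?_ j ω h2⟩
      exact Finset.insert_subset hj' Finset.sdiff_subset
    · exact measure_ne_top _ _
  have m1A : m - 1 ∈ A := by simp only [hA, Finset.mem_Icc]; omega
  have mA : m ∈ A := by simp only [hA, Finset.mem_Icc]; omega
  have m1B : m - 1 ∈ B := by simp only [hB, Finset.mem_Icc]; omega
  have mB : m ∈ B := by simp only [hB, Finset.mem_Icc]; omega
  have s1 := same A hAc m1A mA
  have s2 := same B hBc m1B mB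
  have c1 := cross (m-1) m m1A mA mB (by omega)
  have c2 := cross m (m-1) mA m1A m1B (by omega)
  have hsub : ({ω | inTopQ q Z A (m - 1) ω ∨ inTopQ q Z B (m - 1) ω} ∩
        {ω | inTopQ q Z A m ω ∨ inTopQ q Z B m ω}) ⊆
      (({ω | inTopQ q Z A (m-1) ω ∧ inTopQ q Z A m ω} ∪
        {ω | inTopQ q Z B (m-1) ω ∧ inTopQ q Z B m ω}) ∪
        {ω | inTopQ q Z A (m-1) ω ∧ inTopQ q Z B m ω}) ∪
        {ω | inTopQ q Z A m ω ∧ inTopQ q Z B (m-1) ω} := by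
    intro ω hω
    simp only [Set.mem_inter_iff, Set.mem_union, Set.mem_setOf_eq] at hω ⊢
    tauto
  have u0 := measureReal_mono (μ := P) hsub (measure_ne_top _ _)
  refine u0.trans ((measureReal_union_le _ _).trans ?_)
  have u1 := measureReal_union_le (μ := P) ({ω | inTopQ q Z A (m-1) ω ∧ inTopQ q Z A m ω} ∪
        {ω | inTopQ q Z B (m-1) ω ∧ inTopQ q Z B m ω})
        {ω | inTopQ q Z A (m-1) ω ∧ inTopQ q Z B m ω}
  have u2 := measureReal_union_le (μ := P) {ω | inTopQ q Z A (m-1) ω ∧ inTopQ q Z A m ω}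
        {ω | inTopQ q Z B (m-1) ω ∧ inTopQ q Z B m ω}
  have e : 2 * (2 * (q : ℝ) ^ 2 - (q : ℝ)) / (((m : ℝ) - 1) * ((m : ℝ) - (ℓ : ℝ) + 1))
      = (q * (q - 1) : ℝ) / (((m : ℝ) - 1) * ((m : ℝ) - (ℓ : ℝ) + 1))
      + (q * (q - 1) : ℝ) / (((m : ℝ) - 1) * ((m : ℝ) - (ℓ : ℝ) + 1))
      + (q * q : ℝ) / (((m : ℝ) - 1) * ((m : ℝ) - (ℓ : ℝ) + 1))
      + (q * q : ℝ) / (((m : ℝ) - 1) * ((m : ℝ) - (ℓ : ℝ) + 1)) := by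
    rw [← add_div, ← add_div, ← add_div]; congr 1; ring
  rw [e]
  linarith

end
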